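/- arXiv:math/0703164 — 2 statements merged into one kernel-verified Lean document; each statement's English description precedes it below -/
import Mathlib

section
/- Let f(x) = (τ/2)·x² + σ·x + κ be a real quadratic polynomial with τ > 0. For β ∈ 𝒮 define h(β)(x) = e^{f(x)} · ∫_{−∞}^x e^{−f(t)}·β(t) dt; the integral converges absolutely since e^{−f} is a Gaussian. Then h(α′ − f′·α) = α for every α ∈ 𝒮 (pointwise on ℝ); in particular the twisted differential d_f : 𝒮 → 𝒮, d_f(α) = α′ − f′·α, is injective. -/
open MeasureTheory

/-!
Since `(e^{-f} α)' = e^{-f} (α' - f' α)`, the operator `d_f` is the ordinary derivative conjugated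
by `e^f`, and `h` is the conjugate of integration from `-∞`. The fundamental theorem of calculus
gives `h (d_f α) = α`, the boundary term at `-∞` being killed by the boundedness of `e^{-f}` there.
-/

section WittenDifferential

open Asymptotics Filter Set Topology
open scoped SchwartzMap

variable {E : Type*} [NormedAddCommGroup E] [NormedSpace ℝ E]

section ExponentialWeight

variable {f : ℝ → ℝ} {g : ℝ → E} {x : ℝ}

lemma isBigO_exp_neg_smul {X : Type*} {l : Filter X} {f : X → ℝ}
    (hf : l.IsBoundedUnder (· ≥ ·) f) (g : X → E) :
    (fun t ↦ Real.exp (-f t) • g t) =O[l] g := by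
  have hexp : (fun t ↦ Real.exp (-f t)) =O[l] fun _ ↦ (1 : ℝ) :=
    Real.isBigO_exp_comp_one.mpr (isBoundedUnder_le_neg.mpr hf)
  simpa only [one_smul] using hexp.smul (isBigO_refl g l)

lemma integrableOn_Iic_exp_neg_smul (hf : Continuous f)
    (hbdd : atBot.IsBoundedUnder (· ≥ ·) f) (hg : Integrable g) (x : ℝ) :
    IntegrableOn (fun t ↦ Real.exp (-f t) • g t) (Iic x) := by
  have hloc : LocallyIntegrable fun t ↦ Real.exp (-f t) • g t :=
    hg.locallyIntegrable.continuous_smul hf.neg.rexp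
  exact (hloc.locallyIntegrableOn _).integrableOn_of_isBigO_atBot
    (isBigO_exp_neg_smul hbdd g) (hg.integrableAtFilter _)

lemma hasDerivAt_exp_neg_smul {f' : ℝ} {g' : E} (hf : HasDerivAt f f' x)
    (hg : HasDerivAt g g' x) :
    HasDerivAt (fun t ↦ Real.exp (-f t) • g t) (Real.exp (-f x) • (g' - f' • g x)) x := by
  convert hf.fun_neg.exp.fun_smul hg using 1
  module

end ExponentialWeight

/-- The twisted (Witten) differential `d_f α = α' - f' α` on Schwartz functions, with one-forms
`α dx` identified with functions `α`. If `f'` does not have temperate growth, then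
`SchwartzMap.smulLeftCLM` is zero and only the term `α'` remains. -/
noncomputable def wittenDifferential (f : ℝ → ℝ) : 𝓢(ℝ, E) →L[ℝ] 𝓢(ℝ, E) :=
  SchwartzMap.derivCLM ℝ E - SchwartzMap.smulLeftCLM E (deriv f)

/-- The Harvey–Lawson homotopy `h β x = e^{f x} ∫_{-∞}^x e^{-f t} β t dt` for the twisted
differential `d_f`. -/
noncomputable def wittenHomotopy (f : ℝ → ℝ) (β : ℝ → E) (x : ℝ) : E :=
  Real.exp (f x) • ∫ t in Iic x, Real.exp (-f t) • β t

variable {f : ℝ → ℝ}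

lemma wittenDifferential_apply (hf : (deriv f).HasTemperateGrowth) (α : 𝓢(ℝ, E)) (x : ℝ) :
    wittenDifferential f α x = deriv α x - deriv f x • α x := by
  simp only [wittenDifferential, sub_apply, SchwartzMap.derivCLM_apply,
    SchwartzMap.smulLeftCLM_apply_apply hf]

theorem wittenHomotopy_wittenDifferential [CompleteSpace E] (hf : Differentiable ℝ f)
    (hf' : (deriv f).HasTemperateGrowth) (hbdd : atBot.IsBoundedUnder (· ≥ ·) f)
    (α : 𝓢(ℝ, E)) : wittenHomotopy f (wittenDifferential f α) = α := by
  ext x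
  have hderiv (t : ℝ) : HasDerivAt (fun t ↦ Real.exp (-f t) • α t)
      (Real.exp (-f t) • wittenDifferential f α t) t := by
    rw [wittenDifferential_apply hf']
    exact hasDerivAt_exp_neg_smul (hf t).hasDerivAt (α.hasDerivAt t)
  have hlim : Tendsto (fun t ↦ Real.exp (-f t) • α t) atBot (𝓝 0) :=
    (isBigO_exp_neg_smul hbdd α).trans_tendsto ((zero_at_infty α).mono_left atBot_le_cocompact)
  calc wittenHomotopy f (wittenDifferential f α) x
      = Real.exp (f x) • (Real.exp (-f x) • α x - 0) :=
        congrArg (Real.exp (f x) • ·) <| integral_Iic_of_hasDerivAt_of_tendsto'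
          (fun t _ ↦ hderiv t)
          (integrableOn_Iic_exp_neg_smul hf.continuous hbdd (SchwartzMap.integrable _) x) hlim
    _ = α x := by rw [sub_zero, smul_smul, ← Real.exp_add, add_neg_cancel, Real.exp_zero, one_smul]

theorem homotopy_left_inverse_general [CompleteSpace E] (hf : Differentiable ℝ f)
    (hf' : (deriv f).HasTemperateGrowth) (hbdd : atBot.IsBoundedUnder (· ≥ ·) f) :
    (∀ β : 𝓢(ℝ, E), ∀ x, IntegrableOn (fun t ↦ Real.exp (-f t) • β t) (Iic x)) ∧
    (∀ α : 𝓢(ℝ, E), wittenHomotopy f (wittenDifferential f α) = α) ∧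
    Function.Injective (wittenDifferential f : 𝓢(ℝ, E) → 𝓢(ℝ, E)) := by
  have hinv := wittenHomotopy_wittenDifferential (E := E) hf hf' hbdd
  refine ⟨fun β ↦ integrableOn_Iic_exp_neg_smul hf.continuous hbdd β.integrable, hinv,
    fun α₁ α₂ h ↦ DFunLike.coe_injective ?_⟩
  rw [← hinv α₁, h, hinv α₂]

end WittenDifferential

section Quadratic

open Filter

lemma deriv_quadratic (a b c : ℝ) :
    deriv (fun x : ℝ ↦ a * x ^ 2 + b * x + c) = fun x ↦ 2 * a * x + b := by
  ext x
  have hsq : HasDerivAt (fun x : ℝ ↦ a * x ^ 2) (a * (2 * x)) x := by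
    simpa using (hasDerivAt_pow 2 x).const_mul a
  rw [((hsq.fun_add (hasDerivAt_const_mul b)).add_const c).deriv]
  ring

lemma tendsto_quadratic_atBot_atTop {a : ℝ} (ha : 0 < a) (b c : ℝ) :
    Tendsto (fun x : ℝ ↦ a * x ^ 2 + b * x + c) atBot atTop := by
  have hlin : Tendsto (fun x : ℝ ↦ a * x + b) atBot atBot :=
    tendsto_atBot_add_const_right _ b (tendsto_id.const_mul_atBot ha)
  refine (tendsto_atTop_add_const_right _ c (hlin.atBot_mul_atBot₀ tendsto_id)).congr fun x ↦ ?_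
  simp only [id_eq]
  ring

end Quadratic

/-- For the quadratic `f(x) = (τ/2)x² + σx + κ` with `τ > 0`, define
`h(β)(x) = e^{f(x)} · ∫_{−∞}^x e^{−f(t)}·β(t) dt`; the integral converges absolutely
since `e^{−f}` is a Gaussian. Then `h(α′ − f′·α) = α` pointwise for every Schwartz α;
in particular the twisted differential `d_f(α) = α′ − f′·α` is injective on 𝒮. -/
theorem homotopy_left_inverse (τ σ κ : ℝ) (hτ : 0 < τ) (f : ℝ → ℝ)
    (hf : ∀ x, f x = τ / 2 * x ^ 2 + σ * x + κ) :
    (∀ β : SchwartzMap ℝ ℝ, ∀ x : ℝ,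
      IntegrableOn (fun t : ℝ => Real.exp (-(f t)) * β t) (Set.Iic x)) ∧
    (∀ α : SchwartzMap ℝ ℝ, ∀ x : ℝ,
      Real.exp (f x) *
        (∫ t in Set.Iic x,
          Real.exp (-(f t)) * (deriv (⇑α) t - (τ * t + σ) * α t)) = α x) ∧
    (∀ α₁ α₂ : SchwartzMap ℝ ℝ,
      (∀ x : ℝ, deriv (⇑α₁) x - (τ * x + σ) * α₁ x
          = deriv (⇑α₂) x - (τ * x + σ) * α₂ x) → α₁ = α₂) := by
  obtain rfl : f = fun x ↦ τ / 2 * x ^ 2 + σ * x + κ := funext hf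
  have hderiv : deriv (fun x ↦ τ / 2 * x ^ 2 + σ * x + κ) = fun x ↦ τ * x + σ := by
    rw [deriv_quadratic, mul_div_cancel₀ τ two_ne_zero]
  have hgrowth : (deriv fun x ↦ τ / 2 * x ^ 2 + σ * x + κ).HasTemperateGrowth := by
    rw [hderiv]
    fun_prop
  simpa only [wittenHomotopy, funext_iff, Function.Injective, SchwartzMap.ext_iff,
    wittenDifferential_apply hgrowth, hderiv, smul_eq_mul] using
    homotopy_left_inverse_general (E := ℝ) (by fun_prop) hgrowth
      (tendsto_quadratic_atBot_atTop (half_pos hτ) σ κ).isBoundedUnder_ge_atTop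
end

section
/- Let f(x) = (τ/2)·x² + σ·x + κ be a real quadratic polynomial with τ < 0. Define, for β ∈ 𝒮, h(β)(x) = e^{f(x)} · ∫_0^x e^{−f(t)}·β(t) dt, and define P(α) = α(0)·e^{f − f(0)}. Then: (i) h maps 𝒮 into 𝒮; (ii) d_f(h(β)) = β for every β ∈ 𝒮, so d_f : 𝒮 → 𝒮 is surjective; (iii) h(d_f(α)) = α − P(α) for every α ∈ 𝒮; and (iv) P is an idempotent linear projection of 𝒮 onto the one-dimensional subspace ℝ·e^f. In other words, (h, P) are strong deformation retract data for the complex (𝒮 →^{d_f} 𝒮), contracting it onto ℝ·e^f placed in degree 0. -/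
open MeasureTheory

/-!
Any function `u = h(β)` solves `u' = f' u + β`, so every derivative of `u` has the form `p u + s`
with `p` of temperate growth and `s` Schwartz. Hence `u` is Schwartz as soon as it is rapidly
decreasing. Its kernel `e^{f(x) - f(t)}` is only evaluated for `t` between `0` and `x`, where a
negative slope makes `f` drop at least linearly on the way from `t` out to `x`; such a kernel
preserves rapid decay. The identities `d_f h = Id` and `h d_f = Id - P` are the two halves of the
fundamental theorem of calculus for `e^{-f} u`.
-/

open scoped SchwartzMap

section RapidDecay

variable {D E : Type*} [NormedAddCommGroup D] [NormedAddCommGroup E]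

lemma one_add_norm_le_one_add_norm_sub_mul (x y : D) :
    1 + ‖x‖ ≤ (1 + ‖x - y‖) * (1 + ‖y‖) := by
  have htri : ‖x‖ ≤ ‖x - y‖ + ‖y‖ := by simpa using norm_add_le (x - y) y
  nlinarith [norm_nonneg (x - y), norm_nonneg y]

/-- Decay faster than every power of the norm, the zeroth-order half of the definition of a
Schwartz function. The weight `1 + ‖x‖` makes products with functions of temperate growth
immediate. -/
def IsRapidlyDecreasing (u : D → E) : Prop :=
  ∀ k : ℕ, ∃ C : ℝ, ∀ x, (1 + ‖x‖) ^ k * ‖u x‖ ≤ C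

lemma IsRapidlyDecreasing.add {u v : D → E} (hu : IsRapidlyDecreasing u)
    (hv : IsRapidlyDecreasing v) : IsRapidlyDecreasing fun x => u x + v x := by
  intro k
  obtain ⟨A, hA⟩ := hu k
  obtain ⟨B, hB⟩ := hv k
  refine ⟨A + B, fun x => ?_⟩
  calc (1 + ‖x‖) ^ k * ‖u x + v x‖ ≤ (1 + ‖x‖) ^ k * (‖u x‖ + ‖v x‖) := by
        gcongr
        exact norm_add_le _ _
    _ ≤ A + B := by linarith [hA x, hB x]

lemma IsRapidlyDecreasing.exists_one_add_norm_pow_mul_norm_le_mul_inv {u : D → E}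
    (hu : IsRapidlyDecreasing u) (k : ℕ) :
    ∃ B : ℝ, ∀ x, (1 + ‖x‖) ^ k * ‖u x‖ ≤ B * (1 + ‖x‖ ^ 2)⁻¹ := by
  obtain ⟨B, hB⟩ := hu (k + 2)
  refine ⟨B, fun x => ?_⟩
  have hsq : 1 + ‖x‖ ^ 2 ≤ (1 + ‖x‖) ^ 2 := by linarith [add_sq 1 ‖x‖, norm_nonneg x]
  rw [← div_eq_mul_inv, le_div_iff₀ (by positivity)]
  calc (1 + ‖x‖) ^ k * ‖u x‖ * (1 + ‖x‖ ^ 2) ≤ (1 + ‖x‖) ^ k * ‖u x‖ * (1 + ‖x‖) ^ 2 := by gcongr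
    _ = (1 + ‖x‖) ^ (k + 2) * ‖u x‖ := by ring
    _ ≤ B := hB x

variable [NormedSpace ℝ D] [NormedSpace ℝ E]

lemma IsRapidlyDecreasing.smul {p : D → ℝ} {u : D → E} (hu : IsRapidlyDecreasing u)
    (hp : p.HasTemperateGrowth) : IsRapidlyDecreasing fun x => p x • u x := by
  intro k
  obtain ⟨l, A, hA0, hA⟩ := hp.norm_iteratedFDeriv_le_uniform 0
  obtain ⟨B, hB⟩ := hu (k + l)
  refine ⟨A * B, fun x => ?_⟩
  have hpx : ‖p x‖ ≤ A * (1 + ‖x‖) ^ l := by simpa using hA 0 le_rfl x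
  calc (1 + ‖x‖) ^ k * ‖p x • u x‖ ≤ (1 + ‖x‖) ^ k * (A * (1 + ‖x‖) ^ l * ‖u x‖) := by
        rw [norm_smul]
        gcongr
    _ = A * ((1 + ‖x‖) ^ (k + l) * ‖u x‖) := by ring
    _ ≤ A * B := by gcongr; exact hB x

lemma isRapidlyDecreasing_schwartzMap (β : 𝓢(D, E)) : IsRapidlyDecreasing β := fun k =>
  ⟨_, fun x => by
    simpa using SchwartzMap.one_add_le_sup_seminorm_apply (𝕜 := ℝ) (m := (k, 0)) le_rfl le_rfl β x⟩

end RapidDecay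

section LinearODE

variable {E : Type*} [NormedAddCommGroup E] [NormedSpace ℝ E]

lemma hasTemperateGrowth_deriv {p : ℝ → E} (hp : p.HasTemperateGrowth) :
    (deriv p).HasTemperateGrowth := by
  refine ⟨(contDiff_infty_iff_deriv.1 hp.1).2, fun n => ?_⟩
  obtain ⟨k, C, hC⟩ := hp.2 (n + 1)
  refine ⟨k, C, fun x => ?_⟩
  simpa only [norm_iteratedFDeriv_eq_norm_iteratedDeriv, iteratedDeriv_succ'] using hC x

lemma exists_iteratedDeriv_eq_smul_add {q : ℝ → ℝ} (hq : q.HasTemperateGrowth) (β : 𝓢(ℝ, E))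
    {u : ℝ → E} (hu : ∀ x, HasDerivAt u (q x • u x + β x) x) (n : ℕ) :
    ∃ (p : ℝ → ℝ) (s : 𝓢(ℝ, E)), p.HasTemperateGrowth ∧
      iteratedDeriv n u = fun x => p x • u x + s x := by
  induction n with
  | zero => exact ⟨fun _ => 1, 0, .const 1, by simp⟩
  | succ n ih =>
    obtain ⟨p, s, hp, hps⟩ := ih
    refine ⟨deriv p + p * q, SchwartzMap.smulLeftCLM E p β + SchwartzMap.derivCLM ℝ E s,
      (hasTemperateGrowth_deriv hp).add (hp.mul hq), funext fun x => ?_⟩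
    have hpx : HasDerivAt p (deriv p x) x := (hp.1.differentiable (by simp) x).hasDerivAt
    rw [iteratedDeriv_succ, hps, ((hpx.fun_smul (hu x)).fun_add (s.hasDerivAt x)).deriv]
    simp only [Pi.add_apply, Pi.mul_apply, _root_.add_apply,
      SchwartzMap.smulLeftCLM_apply_apply hp, SchwartzMap.derivCLM_apply]
    module

lemma exists_schwartzMap_coe_eq_of_hasDerivAt {q : ℝ → ℝ} (hq : q.HasTemperateGrowth)
    (β : 𝓢(ℝ, E)) {u : ℝ → E} (hu : ∀ x, HasDerivAt u (q x • u x + β x) x)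
    (hdecay : IsRapidlyDecreasing u) : ∃ γ : 𝓢(ℝ, E), ⇑γ = u := by
  refine ⟨⟨u, contDiff_of_differentiable_iteratedDeriv fun n _ => ?_, fun k n => ?_⟩, rfl⟩
  · obtain ⟨p, s, hp, hps⟩ := exists_iteratedDeriv_eq_smul_add hq β hu n
    rw [hps]
    exact ((hp.1.differentiable (by simp)).smul fun x => (hu x).differentiableAt).add
      s.differentiable
  · obtain ⟨p, s, hp, hps⟩ := exists_iteratedDeriv_eq_smul_add hq β hu n
    obtain ⟨C, hC⟩ := (hdecay.smul hp).add (isRapidlyDecreasing_schwartzMap s) k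
    refine ⟨C, fun x => le_trans ?_ (hC x)⟩
    rw [norm_iteratedFDeriv_eq_norm_iteratedDeriv, hps]
    gcongr
    linarith

end LinearODE

section TwistedComplex

variable {E : Type*} [NormedAddCommGroup E] [NormedSpace ℝ E]

/-- The twisted (Witten) differential `d_f α = α' - f' α`. It is given in terms of the derivative
`f'` of `f`, on which alone it depends, and one-forms `α dx` are identified with functions. -/
noncomputable def twistedDifferential (f' : ℝ → ℝ) (α : ℝ → E) : ℝ → E := fun x =>
  deriv α x - f' x • α x

/-- The contracting homotopy `h` of the twisted differential, given by variation of constants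
with initial value `0` at `0`. -/
noncomputable def twistedPrimitive (f : ℝ → ℝ) (β : ℝ → E) : ℝ → E := fun x =>
  Real.exp (f x) • ∫ t in (0 : ℝ)..x, Real.exp (-(f t)) • β t

/-- The projection `P` onto the kernel `E · e^f` of the twisted differential, sending `α` to the
element of the kernel with the same value at `0`. -/
noncomputable def twistedProjection (f : ℝ → ℝ) (α : ℝ → E) : ℝ → E := fun x =>
  Real.exp (f x - f 0) • α 0

variable {f f' : ℝ → ℝ}

section FundamentalTheorem

variable [CompleteSpace E]

lemma hasDerivAt_twistedPrimitive (hf : ∀ x, HasDerivAt f (f' x) x) {β : ℝ → E}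
    (hβ : Continuous β) (x : ℝ) :
    HasDerivAt (twistedPrimitive f β) (f' x • twistedPrimitive f β x + β x) x := by
  have hfc : Continuous f := continuous_iff_continuousAt.2 fun y => (hf y).continuousAt
  have hc : Continuous fun t => Real.exp (-(f t)) • β t := by fun_prop
  refine ((hf x).exp.fun_smul (hc.integral_hasStrictDerivAt 0 x).hasDerivAt).congr_deriv ?_
  rw [smul_smul, ← Real.exp_add, add_neg_cancel, Real.exp_zero, one_smul, twistedPrimitive,
    smul_smul, mul_comm, add_comm]

lemma twistedDifferential_twistedPrimitive (hf : ∀ x, HasDerivAt f (f' x) x) {β : ℝ → E}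
    (hβ : Continuous β) : twistedDifferential f' (twistedPrimitive f β) = β := by
  funext x
  rw [twistedDifferential, (hasDerivAt_twistedPrimitive hf hβ x).deriv, add_sub_cancel_left]

lemma twistedPrimitive_twistedDifferential (hf : ∀ x, HasDerivAt f (f' x) x)
    (hf' : Continuous f') {α : ℝ → E} (hα : ContDiff ℝ 1 α) :
    twistedPrimitive f (twistedDifferential f' α) = α - twistedProjection f α := by
  funext x
  have hfc : Continuous f := continuous_iff_continuousAt.2 fun y => (hf y).continuousAt
  have hαc : Continuous α := hα.continuous
  have : Continuous (deriv α) := hα.continuous_deriv le_rfl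
  have hderiv : ∀ t, HasDerivAt (fun t => Real.exp (-(f t)) • α t)
      (Real.exp (-(f t)) • (deriv α t - f' t • α t)) t := fun t => by
    refine ((hf t).fun_neg.exp.fun_smul
      (hα.differentiable one_ne_zero t).hasDerivAt).congr_deriv ?_
    module
  calc twistedPrimitive f (twistedDifferential f' α) x
      = Real.exp (f x) • (Real.exp (-(f x)) • α x - Real.exp (-(f 0)) • α 0) := by
        simp only [twistedPrimitive, twistedDifferential]
        rw [intervalIntegral.integral_eq_sub_of_hasDerivAt (fun t _ => hderiv t)
          (Continuous.intervalIntegrable (by fun_prop) _ _)]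
    _ = α x - twistedProjection f α x := by
        rw [smul_sub, smul_smul, smul_smul, ← Real.exp_add, ← Real.exp_add, add_neg_cancel,
          Real.exp_zero, one_smul, ← sub_eq_add_neg, twistedProjection]

end FundamentalTheorem

section Decay

lemma exists_one_add_pow_mul_exp_neg_mul_le {m : ℝ} (hm : 0 < m) (k : ℕ) :
    ∃ M : ℝ, ∀ r : ℝ, 0 ≤ r → (1 + r) ^ k * Real.exp (-(m * r)) ≤ M := by
  refine ⟨k.factorial / m ^ k * Real.exp m, fun r hr => ?_⟩
  have hpow : (1 + r) ^ k ≤ k.factorial / m ^ k * Real.exp (m * (1 + r)) := by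
    have h := Real.pow_div_factorial_le_exp (m * (1 + r)) (by positivity) k
    rw [div_le_iff₀' (by positivity), mul_pow] at h
    rwa [div_mul_eq_mul_div, le_div_iff₀' (by positivity)]
  calc (1 + r) ^ k * Real.exp (-(m * r))
      ≤ k.factorial / m ^ k * Real.exp (m * (1 + r)) * Real.exp (-(m * r)) := by gcongr
    _ = k.factorial / m ^ k * Real.exp m := by
        rw [mul_assoc, ← Real.exp_add]
        ring_nf

variable {C m : ℝ}

lemma exists_one_add_norm_pow_mul_exp_sub_le (hm : 0 < m)
    (hdrop : ∀ x, ∀ t ∈ Set.uIcc 0 x, f x - f t ≤ C - m * |x - t|) (k : ℕ) :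
    ∃ M : ℝ, ∀ x, ∀ t ∈ Set.uIcc 0 x,
      (1 + ‖x‖) ^ k * Real.exp (f x - f t) ≤ M * (1 + ‖t‖) ^ k := by
  obtain ⟨M, hM⟩ := exists_one_add_pow_mul_exp_neg_mul_le hm k
  refine ⟨Real.exp C * M, fun x t ht => ?_⟩
  calc (1 + ‖x‖) ^ k * Real.exp (f x - f t)
      ≤ ((1 + ‖x - t‖) * (1 + ‖t‖)) ^ k * Real.exp (C + -(m * ‖x - t‖)) := by
        gcongr
        · exact one_add_norm_le_one_add_norm_sub_mul x t
        · exact hdrop x t ht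
    _ = Real.exp C * ((1 + ‖x - t‖) ^ k * Real.exp (-(m * ‖x - t‖))) * (1 + ‖t‖) ^ k := by
        rw [mul_pow, Real.exp_add]
        ring
    _ ≤ Real.exp C * M * (1 + ‖t‖) ^ k := by
        gcongr
        exact hM _ (norm_nonneg _)

lemma norm_intervalIntegral_le_of_norm_le_mul_inv_one_add_sq {g : ℝ → E} {A x : ℝ}
    (hg : ∀ t ∈ Set.uIcc 0 x, ‖g t‖ ≤ A * (1 + t ^ 2)⁻¹) :
    ‖∫ t in (0 : ℝ)..x, g t‖ ≤ A * (Real.pi / 2) := by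
  have hA : 0 ≤ A := by simpa using (norm_nonneg _).trans (hg 0 Set.left_mem_uIcc)
  calc ‖∫ t in (0 : ℝ)..x, g t‖ ≤ |∫ t in (0 : ℝ)..x, A * (1 + t ^ 2)⁻¹| :=
        intervalIntegral.norm_integral_le_abs_of_norm_le
          ((ae_restrict_mem measurableSet_uIoc).mono fun t ht =>
            hg t (Set.uIoc_subset_uIcc ht))
          (intervalIntegral.intervalIntegrable_inv_one_add_sq.const_mul A)
    _ = A * |Real.arctan x| := by
        rw [intervalIntegral.integral_const_mul, integral_inv_one_add_sq, Real.arctan_zero,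
          sub_zero, abs_mul, abs_of_nonneg hA]
    _ ≤ A * (Real.pi / 2) := by
        gcongr
        exact abs_le.2 ⟨(Real.neg_pi_div_two_lt_arctan x).le, (Real.arctan_lt_pi_div_two x).le⟩

lemma isRapidlyDecreasing_twistedPrimitive (hm : 0 < m)
    (hdrop : ∀ x, ∀ t ∈ Set.uIcc 0 x, f x - f t ≤ C - m * |x - t|) {β : ℝ → E}
    (hβ : IsRapidlyDecreasing β) : IsRapidlyDecreasing (twistedPrimitive f β) := by
  intro k
  obtain ⟨M, hM⟩ := exists_one_add_norm_pow_mul_exp_sub_le hm hdrop k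
  obtain ⟨B, hB⟩ := hβ.exists_one_add_norm_pow_mul_norm_le_mul_inv k
  have hM0 : 0 ≤ M := by simpa using (hM 0 0 Set.left_mem_uIcc).trans' (by positivity)
  refine ⟨M * B * (Real.pi / 2), fun x => ?_⟩
  have hbound : ∀ t ∈ Set.uIcc 0 x,
      ‖((1 + ‖x‖) ^ k * Real.exp (f x)) • Real.exp (-(f t)) • β t‖
        ≤ M * B * (1 + t ^ 2)⁻¹ := fun t ht => by
    calc ‖((1 + ‖x‖) ^ k * Real.exp (f x)) • Real.exp (-(f t)) • β t‖
        = (1 + ‖x‖) ^ k * Real.exp (f x - f t) * ‖β t‖ := by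
          rw [smul_smul, mul_assoc, ← Real.exp_add, ← sub_eq_add_neg,
            norm_smul_of_nonneg (by positivity)]
      _ ≤ M * (1 + ‖t‖) ^ k * ‖β t‖ := mul_le_mul_of_nonneg_right (hM x t ht) (norm_nonneg _)
      _ = M * ((1 + ‖t‖) ^ k * ‖β t‖) := mul_assoc _ _ _
      _ ≤ M * (B * (1 + ‖t‖ ^ 2)⁻¹) := mul_le_mul_of_nonneg_left (hB t) hM0
      _ = M * B * (1 + t ^ 2)⁻¹ := by rw [Real.norm_eq_abs, sq_abs, mul_assoc]
  calc (1 + ‖x‖) ^ k * ‖twistedPrimitive f β x‖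
      = ‖∫ t in (0 : ℝ)..x, ((1 + ‖x‖) ^ k * Real.exp (f x)) • Real.exp (-(f t)) • β t‖ := by
        rw [intervalIntegral.integral_smul, mul_smul, norm_smul_of_nonneg (by positivity),
          twistedPrimitive]
    _ ≤ M * B * (Real.pi / 2) := norm_intervalIntegral_le_of_norm_le_mul_inv_one_add_sq hbound

end Decay

theorem sdr_data_negative_slope_general [CompleteSpace E] {C m : ℝ}
    (hf : ∀ x, HasDerivAt f (f' x) x) (hf' : f'.HasTemperateGrowth) (hm : 0 < m)
    (hdrop : ∀ x, ∀ t ∈ Set.uIcc 0 x, f x - f t ≤ C - m * |x - t|) :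
    (∀ β : 𝓢(ℝ, E), ∃ γ : 𝓢(ℝ, E), ⇑γ = twistedPrimitive f β) ∧
    (∀ β : 𝓢(ℝ, E), twistedDifferential f' (twistedPrimitive f β) = β) ∧
    (∀ β : 𝓢(ℝ, E), ∃ α : 𝓢(ℝ, E), twistedDifferential f' α = β) ∧
    (∀ α : 𝓢(ℝ, E),
      twistedPrimitive f (twistedDifferential f' α) = α - twistedProjection f α) ∧
    (∀ α : ℝ → E, twistedProjection f (twistedProjection f α) = twistedProjection f α) ∧
    (∀ (a b : ℝ) (α β : ℝ → E), twistedProjection f (a • α + b • β)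
      = a • twistedProjection f α + b • twistedProjection f β) ∧
    (∀ α : ℝ → E, ∃ c : E, twistedProjection f α = fun x => Real.exp (f x) • c) ∧
    (∀ c : E, twistedProjection f (fun x => Real.exp (f x) • c)
      = fun x => Real.exp (f x) • c) := by
  have h_schwartz : ∀ β : 𝓢(ℝ, E), ∃ γ : 𝓢(ℝ, E), ⇑γ = twistedPrimitive f β := fun β =>
    exists_schwartzMap_coe_eq_of_hasDerivAt hf' β (hasDerivAt_twistedPrimitive hf β.continuous)
      (isRapidlyDecreasing_twistedPrimitive hm hdrop (isRapidlyDecreasing_schwartzMap β))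
  have h_right : ∀ β : 𝓢(ℝ, E), twistedDifferential f' (twistedPrimitive f β) = β := fun β =>
    twistedDifferential_twistedPrimitive hf β.continuous
  refine ⟨h_schwartz, h_right, fun β => ?_, fun α => ?_, fun α => ?_, fun a b α β => ?_,
    fun α => ⟨Real.exp (-(f 0)) • α 0, ?_⟩, fun c => ?_⟩
  · obtain ⟨γ, hγ⟩ := h_schwartz β
    exact ⟨γ, hγ ▸ h_right β⟩
  · exact twistedPrimitive_twistedDifferential hf hf'.1.continuous (α.smooth 1)
  · simp [twistedProjection, funext_iff]
  · funext x
    simp only [twistedProjection, Pi.add_apply, Pi.smul_apply]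
    module
  · funext x
    rw [twistedProjection, smul_smul, ← Real.exp_add, sub_eq_add_neg]
  · funext x
    rw [twistedProjection, smul_smul, ← Real.exp_add, sub_add_cancel]

end TwistedComplex

section Quadratic

lemma hasDerivAt_quadratic {τ σ κ : ℝ} {f : ℝ → ℝ}
    (hf : ∀ x, f x = τ / 2 * x ^ 2 + σ * x + κ) (x : ℝ) : HasDerivAt f (τ * x + σ) x := by
  rw [funext hf]
  refine ((((hasDerivAt_pow 2 x).const_mul (τ / 2)).fun_add
    ((hasDerivAt_id' x).const_mul σ)).add_const κ).congr_deriv ?_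
  push_cast
  ring

lemma quadratic_sub_le_of_mem_uIcc {τ σ κ : ℝ} (hτ : τ < 0) {f : ℝ → ℝ}
    (hf : ∀ x, f x = τ / 2 * x ^ 2 + σ * x + κ) (x t : ℝ) (ht : t ∈ Set.uIcc 0 x) :
    f x - f t ≤ (|σ| + 1) ^ 2 / (2 * -τ) - |x - t| := by
  have hmul : 0 ≤ t * (x - t) := by
    rcases Set.mem_uIcc.1 ht with h | h
    · exact mul_nonneg h.1 (sub_nonneg.2 h.2)
    · exact mul_nonneg_of_nonpos_of_nonpos h.2 (sub_nonpos.2 h.1)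
  have hlin : σ * (x - t) ≤ |σ| * |x - t| := (le_abs_self _).trans_eq (abs_mul _ _)
  have hsq : τ / 2 * |x - t| ^ 2 + (|σ| + 1) * |x - t| ≤ (|σ| + 1) ^ 2 / (2 * -τ) := by
    rw [le_div_iff₀ (by linarith)]
    nlinarith [sq_nonneg (τ * |x - t| + (|σ| + 1))]
  calc f x - f t = τ / 2 * |x - t| ^ 2 + τ * (t * (x - t)) + σ * (x - t) := by
        rw [hf, hf, sq_abs]
        ring
    _ ≤ τ / 2 * |x - t| ^ 2 + 0 + |σ| * |x - t| := by
        gcongr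
        exact mul_nonpos_of_nonpos_of_nonneg hτ.le hmul
    _ ≤ (|σ| + 1) ^ 2 / (2 * -τ) - |x - t| := by linarith

end Quadratic

/-- For the quadratic `f(x) = (τ/2)x² + σx + κ` with `τ < 0`, define
`h(β)(x) = e^{f(x)} · ∫_0^x e^{−f(t)}·β(t) dt` and `P(α) = α(0)·e^{f − f(0)}`. Then:
(i) `h` maps 𝒮 into 𝒮; (ii) `d_f(h(β)) = β` for every β ∈ 𝒮, so `d_f` is surjective;
(iii) `h(d_f(α)) = α − P(α)` for every α ∈ 𝒮; (iv) `P` is an idempotent linear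
projection of 𝒮 onto the one-dimensional subspace `ℝ·e^f`. In other words, `(h, P)`
are strong deformation retract data contracting `(𝒮 → 𝒮, d_f)` onto `ℝ·e^f` in degree 0. -/
theorem sdr_data_negative_slope (τ σ κ : ℝ) (hτ : τ < 0) (f : ℝ → ℝ)
    (hf : ∀ x, f x = τ / 2 * x ^ 2 + σ * x + κ) :
    -- (i) h maps 𝒮 into 𝒮
    (∀ β : SchwartzMap ℝ ℝ, ∃ γ : SchwartzMap ℝ ℝ, ∀ x : ℝ,
      γ x = Real.exp (f x) * ∫ t in (0:ℝ)..x, Real.exp (-(f t)) * β t) ∧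
    -- (ii) d_f ∘ h = Id, so d_f is surjective
    (∀ β : SchwartzMap ℝ ℝ, ∀ x : ℝ,
      deriv (fun y => Real.exp (f y) * ∫ t in (0:ℝ)..y, Real.exp (-(f t)) * β t) x
        - (τ * x + σ) *
          (Real.exp (f x) * ∫ t in (0:ℝ)..x, Real.exp (-(f t)) * β t) = β x) ∧
    (∀ β : SchwartzMap ℝ ℝ, ∃ α : SchwartzMap ℝ ℝ,
      ∀ x : ℝ, deriv (⇑α) x - (τ * x + σ) * α x = β x) ∧
    -- (iii) h ∘ d_f = Id − P
    (∀ α : SchwartzMap ℝ ℝ, ∀ x : ℝ,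
      Real.exp (f x) *
        (∫ t in (0:ℝ)..x, Real.exp (-(f t)) * (deriv (⇑α) t - (τ * t + σ) * α t))
        = α x - α 0 * Real.exp (f x - f 0)) ∧
    -- (iv) P is an idempotent linear projection onto ℝ·e^f
    (∀ α : ℝ → ℝ, ∀ x : ℝ,
      (fun y => α 0 * Real.exp (f y - f 0)) 0 * Real.exp (f x - f 0)
        = α 0 * Real.exp (f x - f 0)) ∧
    (∀ (a b : ℝ) (α β : ℝ → ℝ), ∀ x : ℝ,
      (a * α 0 + b * β 0) * Real.exp (f x - f 0)
        = a * (α 0 * Real.exp (f x - f 0)) + b * (β 0 * Real.exp (f x - f 0))) ∧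
    (∀ α : ℝ → ℝ, ∃ c : ℝ, ∀ x : ℝ,
      α 0 * Real.exp (f x - f 0) = c * Real.exp (f x)) ∧
    (∀ c : ℝ, ∀ x : ℝ,
      (fun y => c * Real.exp (f y)) 0 * Real.exp (f x - f 0) = c * Real.exp (f x)) := by
  have h := sdr_data_negative_slope_general (E := ℝ) (hasDerivAt_quadratic hf) (by fun_prop) one_pos
    (by simpa only [one_mul] using quadratic_sub_le_of_mem_uIcc hτ hf)
  unfold twistedDifferential twistedPrimitive twistedProjection at h
  simpa [funext_iff, mul_comm] using h
end
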